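/- arXiv:1104.1037 — 4 statements merged into one kernel-verified Lean document; each statement's English description precedes it below -/
import Mathlib

section
/- Let k ≥ 1 and let m₁, …, m_k be even integers with mᵢ ≠ 2 for every i. Then for every integer m, the product X₂ · X₁^{m₁} · X₂ · X₁^{m₂} · X₂ ⋯ X₁^{m_k} · X₂ (containing k+1 factors X₂, with the exponents m₁,…,m_k interleaved) is equal neither to X₁^m nor to −X₁^m. -/
/-- `X₁` is the matrix with rows `(1,0), (1,1)` in `SL(2,ℤ)`. -/
def X₁ : Matrix.SpecialLinearGroup (Fin 2) ℤ :=
  ⟨!![1, 0; 1, 1], by simp [Matrix.det_fin_two_of]⟩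

/-- `X₂` is the matrix with rows `(1,-1), (0,1)` in `SL(2,ℤ)`. -/
def X₂ : Matrix.SpecialLinearGroup (Fin 2) ℤ :=
  ⟨!![1, -1; 0, 1], by simp [Matrix.det_fin_two_of]⟩

/-!
The argument is a ping-pong on column vectors. The vectors `(a, b)` whose slope `b / a` lies in
`(-2, 0)` form a double cone. It contains `X₂ (0, 1) = (-1, 1)`, and since `X₂` sends the slope `t`
to `t / (1 - t)`, its preimage under `X₂` consists of the vectors with slope outside `[0, 2]`. As
`X₁ ^ m` translates slopes by `m`, the product `X₂ * X₁ ^ m` preserves the cone as soon as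
`(m - 2, m)` misses `[0, 2]`, that is, as soon as `2 ≤ |m - 2|`; an even `m ≠ 2` has this property.
Hence the whole product sends `(0, 1)` into the cone, whereas `± X₁ ^ m` sends it to the vertical
vector `(0, ± 1)`.
-/

open scoped Matrix

/-- The double cone of vectors `(a, b)` whose slope `b / a` lies in the open interval `(-2, 0)`, the
attracting set of the ping-pong argument. The condition `|1 + b / a| < 1` is multiplied by `|a|` to
avoid division; in this form it excludes `a = 0`. -/
def slopeCone (R : Type*) [Ring R] [LinearOrder R] : Set (Fin 2 → R) :=
  {v | |v 0 + v 1| < |v 0|}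

section OrderedRing

variable {R : Type*} [CommRing R] [LinearOrder R] [IsStrictOrderedRing R]

theorem ne_zero_of_mem_slopeCone {v : Fin 2 → R} (hv : v ∈ slopeCone R) : v 0 ≠ 0 :=
  abs_pos.mp ((abs_nonneg _).trans_lt hv)

theorem abs_lt_abs_sub_of_two_le_abs_sub_two {a b c : R} (hc : 2 ≤ |c - 2|)
    (hab : |a + b| < |a|) : |a| < |a - (c * a + b)| := by
  have double_le : 2 * |a| ≤ |a + b| + |a - (c * a + b)| :=
    calc 2 * |a| ≤ |c - 2| * |a| := by gcongr
      _ = |(a + b) + (a - (c * a + b))| := by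
        rw [← abs_mul, ← abs_neg]
        ring_nf
      _ ≤ |a + b| + |a - (c * a + b)| := abs_add_le _ _
  linarith

theorem shear_mem_slopeCone {v : Fin 2 → R} {c : R} (hc : 2 ≤ |c - 2|) (hv : v ∈ slopeCone R) :
    ![v 0 - (c * v 0 + v 1), c * v 0 + v 1] ∈ slopeCone R := by
  simpa [slopeCone] using abs_lt_abs_sub_of_two_le_abs_sub_two hc hv

end OrderedRing

theorem coe_X₁_zpow (m : ℤ) : (X₁ ^ m).val = !![1, 0; m, 1] := by
  have coe_X₁ : X₁.val = !![1, 0; 1, 1] := rfl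
  induction m with
  | zero => simp [Matrix.one_fin_two]
  | succ n ih =>
    rw [zpow_add_one, Matrix.SpecialLinearGroup.coe_mul, ih, coe_X₁]
    simp
  | pred n ih =>
    rw [zpow_sub_one, Matrix.SpecialLinearGroup.coe_mul, ih,
      Matrix.SpecialLinearGroup.coe_inv, coe_X₁, Matrix.adjugate_fin_two_of]
    simp [sub_eq_add_neg]

theorem X₁_zpow_mulVec (m : ℤ) (v : Fin 2 → ℤ) :
    (X₁ ^ m).val *ᵥ v = ![v 0, m * v 0 + v 1] := by
  ext i
  fin_cases i <;> simp [coe_X₁_zpow, Matrix.mulVec, dotProduct]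

theorem X₂_mulVec (v : Fin 2 → ℤ) : X₂.val *ᵥ v = ![v 0 - v 1, v 1] := by
  ext i
  fin_cases i <;> simp [X₂, Matrix.mulVec, dotProduct, sub_eq_add_neg]

theorem X₂_mul_X₁_zpow_mulVec_mem_slopeCone {n : ℤ} (hn : 2 ≤ |n - 2|) {v : Fin 2 → ℤ}
    (hv : v ∈ slopeCone ℤ) : (X₂ * X₁ ^ n).val *ᵥ v ∈ slopeCone ℤ := by
  rw [Matrix.SpecialLinearGroup.coe_mul, ← Matrix.mulVec_mulVec, X₁_zpow_mulVec, X₂_mulVec]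
  simpa using shear_mem_slopeCone hn hv

theorem X₂_mul_prod_mulVec_mem_slopeCone (ms : List ℤ) (hms : ∀ mi ∈ ms, 2 ≤ |mi - 2|) :
    (X₂ * (ms.map (fun mi => X₁ ^ mi * X₂)).prod).val *ᵥ ![0, 1] ∈ slopeCone ℤ := by
  induction ms with
  | nil =>
    rw [List.map_nil, List.prod_nil, mul_one, X₂_mulVec]
    simp [slopeCone]
  | cons n ms ih =>
    obtain ⟨hn, hms⟩ := List.forall_mem_cons.mp hms
    rw [List.map_cons, List.prod_cons, mul_assoc (X₁ ^ n), ← mul_assoc X₂,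
      Matrix.SpecialLinearGroup.coe_mul, ← Matrix.mulVec_mulVec]
    exact X₂_mul_X₁_zpow_mulVec_mem_slopeCone hn (ih hms)

theorem two_le_abs_sub_two_of_even {n : ℤ} (hn : Even n) (hne : n ≠ 2) : 2 ≤ |n - 2| :=
  Int.le_of_dvd (abs_pos.mpr (sub_ne_zero.mpr hne))
    ((dvd_abs _ _).mpr (hn.sub even_two).two_dvd)

theorem stmt0_general (ms : List ℤ) (hms : ∀ mi ∈ ms, 2 ≤ |mi - 2|) (m : ℤ) :
    X₂ * (ms.map (fun mi => X₁ ^ mi * X₂)).prod ≠ X₁ ^ m ∧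
    X₂ * (ms.map (fun mi => X₁ ^ mi * X₂)).prod ≠ -(X₁ ^ m) := by
  have apply_zero_ne := ne_zero_of_mem_slopeCone (X₂_mul_prod_mulVec_mem_slopeCone ms hms)
  constructor <;> intro h <;> apply apply_zero_ne <;> rw [h]
  · rw [X₁_zpow_mulVec]
    rfl
  · rw [Matrix.SpecialLinearGroup.coe_neg, Matrix.neg_mulVec, X₁_zpow_mulVec]
    rfl

/-- Let `k ≥ 1` and `m₁, …, m_k` be even integers, each `≠ 2`.  Then the product
`X₂ · X₁^{m₁} · X₂ · X₁^{m₂} · X₂ ⋯ X₁^{m_k} · X₂` equals neither `X₁^m` nor `-X₁^m`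
for any integer `m`. -/
theorem stmt0 (k : ℕ) (hk : 1 ≤ k) (ms : List ℤ) (hlen : ms.length = k)
    (heven : ∀ mi ∈ ms, Even mi) (hne2 : ∀ mi ∈ ms, mi ≠ 2) (m : ℤ) :
    X₂ * (ms.map (fun mi => X₁ ^ mi * X₂)).prod ≠ X₁ ^ m ∧
    X₂ * (ms.map (fun mi => X₁ ^ mi * X₂)).prod ≠ -(X₁ ^ m) :=
  stmt0_general ms (fun n hn => two_le_abs_sub_two_of_even (heven n hn) (hne2 n hn)) m
end

section
/- Let k ≥ 1 and let m₁, …, m_k be even integers with mᵢ ≠ 2 for every i. Then the element P = x₂ · x₁^{m₁} · x₂ · x₁^{m₂} ⋯ x₁^{m_k} · x₂ of G can be written either as P = b·S or as P = a²·b·a²·b·S, where S is the product of a nonempty finite list w₁, …, w_r of elements of G such that every wᵢ lies in {a, a², b}, in any two consecutive entries exactly one is equal to b (so the entries alternate between {a, a²} and {b}), and w₁ ∈ {a, a²}. -/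
/-- The free product `(ℤ/3ℤ) ∗ (ℤ/2ℤ)` (isomorphic to `PSL(2,ℤ)`). -/
abbrev G : Type := Monoid.Coprod (Multiplicative (ZMod 3)) (Multiplicative (ZMod 2))

/-- `a` is the image in `G` of the generator of `ℤ/3ℤ`, so `a³ = 1`. -/
def a : G := Monoid.Coprod.inl (Multiplicative.ofAdd (1 : ZMod 3))

/-- `b` is the image in `G` of the generator of `ℤ/2ℤ`, so `b² = 1`. -/
def b : G := Monoid.Coprod.inr (Multiplicative.ofAdd (1 : ZMod 2))

/-- `x₁ = a·b·a`, corresponding to `p(X₁)`. -/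
def x₁ : G := a * b * a

/-- `x₂ = b·a²`, corresponding to `p(X₂)`. -/
def x₂ : G := b * a ^ 2

/-- A list `w₁, …, w_r` is a reduced sequence if every entry lies in `{a, a², b}`,
of any two consecutive entries exactly one equals `b`. -/
def IsReducedSeq (ws : List G) : Prop :=
  (∀ w ∈ ws, w = a ∨ w = a ^ 2 ∨ w = b) ∧
  List.Chain' (fun x y => (x = b ∧ y ≠ b) ∨ (x ≠ b ∧ y = b)) ws

/-!
Since `x₂ x₁ x₂⁻¹ = a²b`, moving `x₂` to the right through the power gives
`x₂ x₁ᵐ p = (a²b)ᵐ x₂ p`, and `a²b` is itself a reduced word, with inverse `ba`. Read the product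
from right to left. If the tail `p` is `b·S` or `(a²b)²·S`, then a power `m ≤ 0` yields a word
`b·S'`, while for `m ≥ 2` the cancellation between `(a²b)ᵐ` and `x₂ p` consumes at most two of the
factors `a²b`, so that `m ≥ 4` leaves a prefix `(a²b)²`. An even integer other than `2` is `≤ 0` or
`≥ 4`.
-/

theorem a_pow_three : a ^ 3 = 1 := by
  rw [a, ← map_pow, show Multiplicative.ofAdd (1 : ZMod 3) ^ 3 = 1 by decide, map_one]

theorem b_mul_b : b * b = 1 := by
  rw [b, ← map_mul,
    show Multiplicative.ofAdd (1 : ZMod 2) * Multiplicative.ofAdd 1 = 1 by decide, map_one]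

theorem a_mul_a_mul_a_mul (g : G) : a * (a * (a * g)) = g := by
  simpa only [pow_three, mul_assoc, one_mul] using congrArg (· * g) a_pow_three

theorem b_mul_b_mul (g : G) : b * (b * g) = g := by
  rw [← mul_assoc, b_mul_b, one_mul]

theorem ne_b_of_eq_a_or_eq_a_sq {c : G} (hc : c = a ∨ c = a ^ 2) : c ≠ b := by
  have fst_a : Monoid.Coprod.fst a = Multiplicative.ofAdd (1 : ZMod 3) :=
    Monoid.Coprod.fst_apply_inl _
  have fst_b : (Monoid.Coprod.fst b : Multiplicative (ZMod 3)) = 1 :=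
    Monoid.Coprod.fst_apply_inr _
  rintro rfl
  rcases hc with h | h <;> replace h := congrArg Monoid.Coprod.fst h
  · rw [fst_a, fst_b] at h
    exact absurd h (by decide)
  · rw [map_pow, fst_a, fst_b] at h
    exact absurd h (by decide)

theorem inv_a_sq_mul_b : (a ^ 2 * b)⁻¹ = b * a :=
  inv_eq_of_mul_eq_one_left <| by simp only [pow_two, mul_assoc, a_mul_a_mul_a_mul, b_mul_b]

theorem semiconjBy_x₂_x₁ : SemiconjBy x₂ x₁ (a ^ 2 * b) := by
  simp only [SemiconjBy, x₁, x₂, pow_two, mul_assoc, a_mul_a_mul_a_mul, b_mul_b_mul]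

theorem IsReducedSeq.cons_b_cons {c w : G} {ws : List G} (hc : c = a ∨ c = a ^ 2)
    (hw : w = a ∨ w = a ^ 2) (h : IsReducedSeq (w :: ws)) : IsReducedSeq (c :: b :: w :: ws) := by
  obtain ⟨hmem, hchain⟩ := h
  refine ⟨?_, .cons_cons (.inr ⟨ne_b_of_eq_a_or_eq_a_sq hc, rfl⟩)
    (.cons_cons (.inl ⟨rfl, ne_b_of_eq_a_or_eq_a_sq hw⟩) hchain)⟩
  simp only [List.forall_mem_cons] at hmem ⊢
  exact ⟨by tauto, by tauto, hmem⟩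

/-- `StartsWithA s` says that the normal form of `s` in the free product begins with `a` or `a²`,
that is, `s` is a possible value of the product `S` of the theorem. -/
def StartsWithA (s : G) : Prop :=
  ∃ ws : List G, ws ≠ [] ∧ IsReducedSeq ws ∧
    (ws.head? = some a ∨ ws.head? = some (a ^ 2)) ∧ ws.prod = s

theorem startsWithA_a_sq : StartsWithA (a ^ 2) :=
  ⟨[a ^ 2], by simp, ⟨by simp, List.isChain_singleton _⟩, by simp, by simp⟩

namespace StartsWithA

variable {c s : G}

theorem mul_b_mul (hc : c = a ∨ c = a ^ 2) (hs : StartsWithA s) : StartsWithA (c * (b * s)) := by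
  obtain ⟨_ | ⟨w, ws⟩, hne, hred, hhead, rfl⟩ := hs
  · contradiction
  · simp only [List.head?_cons, Option.some.injEq] at hhead
    exact ⟨c :: b :: w :: ws, by simp, hred.cons_b_cons hc hhead, by simpa using hc, by simp⟩

theorem pow_mul (hc : c = a ∨ c = a ^ 2) (hs : StartsWithA s) (n : ℕ) :
    StartsWithA ((c * b) ^ n * s) := by
  induction n with
  | zero => simpa only [pow_zero, one_mul] using hs
  | succ n ih => simpa only [pow_succ', mul_assoc] using mul_b_mul hc ih

end StartsWithA

/-- The two shapes `b·S` and `a²·b·a²·b·S` allowed in the theorem, the second one written as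
`(a²b)²·S`; this is the invariant carried along the product. -/
def IsAdmissible (p : G) : Prop :=
  ∃ s, StartsWithA s ∧ (p = b * s ∨ p = (a ^ 2 * b) ^ 2 * s)

namespace IsAdmissible

variable {p : G} {m : ℤ}

theorem exists_x₂_mul_eq_b_mul (hp : IsAdmissible p) :
    ∃ r, StartsWithA r ∧ x₂ * p = b * r := by
  obtain ⟨s, hs, rfl | rfl⟩ := hp
  · exact ⟨a ^ 2 * (b * s), hs.mul_b_mul (.inr rfl), mul_assoc _ _ _⟩
  · refine ⟨a * (b * (a ^ 2 * (b * s))), (hs.mul_b_mul (.inr rfl)).mul_b_mul (.inl rfl), ?_⟩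
    simp only [x₂, pow_two, mul_assoc, a_mul_a_mul_a_mul]

theorem zpow_mul_x₂_mul_of_nonpos (hp : IsAdmissible p) (hm : m ≤ 0) :
    IsAdmissible ((a ^ 2 * b) ^ m * (x₂ * p)) := by
  obtain ⟨n, rfl⟩ := Int.exists_eq_neg_ofNat hm
  obtain ⟨r, hr, hpr⟩ := hp.exists_x₂_mul_eq_b_mul
  refine ⟨(a * b) ^ n * r, hr.pow_mul (.inl rfl) n, .inl ?_⟩
  calc (a ^ 2 * b) ^ (-n : ℤ) * (x₂ * p)
      = (b * a) ^ n * b * r := by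
        rw [zpow_neg, zpow_natCast, ← inv_pow, inv_a_sq_mul_b, hpr, mul_assoc]
    _ = b * ((a * b) ^ n * r) := by rw [mul_pow_mul, mul_assoc]

theorem startsWithA_sq_mul_x₂_mul (hp : IsAdmissible p) :
    StartsWithA ((a ^ 2 * b) ^ 2 * (x₂ * p)) := by
  obtain ⟨s, hs, rfl | rfl⟩ := hp
  · have hcancel : (a ^ 2 * b) ^ 2 * (x₂ * (b * s)) = a ^ 2 * (b * (a * (b * s))) := by
      simp only [x₂, pow_two, mul_assoc, a_mul_a_mul_a_mul, b_mul_b_mul]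
    exact hcancel ▸ (hs.mul_b_mul (.inl rfl)).mul_b_mul (.inr rfl)
  · have hcancel : (a ^ 2 * b) ^ 2 * (x₂ * ((a ^ 2 * b) ^ 2 * s)) = a * (b * s) := by
      simp only [x₂, pow_two, mul_assoc, a_mul_a_mul_a_mul, b_mul_b_mul]
    exact hcancel ▸ hs.mul_b_mul (.inl rfl)

theorem zpow_mul_x₂_mul_of_four_le (hp : IsAdmissible p) (hm : 4 ≤ m) :
    IsAdmissible ((a ^ 2 * b) ^ m * (x₂ * p)) := by
  obtain ⟨n, rfl⟩ := Int.le.dest hm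
  refine ⟨(a ^ 2 * b) ^ n * ((a ^ 2 * b) ^ 2 * (x₂ * p)),
    hp.startsWithA_sq_mul_x₂_mul.pow_mul (.inr rfl) n, .inr ?_⟩
  rw [show (4 + n : ℤ) = (2 + (n + 2) : ℕ) by omega, zpow_natCast, pow_add, pow_add, mul_assoc,
    mul_assoc]

theorem x₂_mul_x₁_zpow_mul (hp : IsAdmissible p) (hm : m ≤ 0 ∨ 4 ≤ m) :
    IsAdmissible (x₂ * (x₁ ^ m * p)) := by
  rw [← mul_assoc, (semiconjBy_x₂_x₁.zpow_right m).eq, mul_assoc]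
  exact hm.elim hp.zpow_mul_x₂_mul_of_nonpos hp.zpow_mul_x₂_mul_of_four_le

end IsAdmissible

theorem isAdmissible_x₂ : IsAdmissible x₂ :=
  ⟨a ^ 2, startsWithA_a_sq, .inl rfl⟩

theorem isAdmissible_x₂_mul_prod {ms : List ℤ} (hms : ∀ m ∈ ms, m ≤ 0 ∨ 4 ≤ m) :
    IsAdmissible (x₂ * (ms.map fun m => x₁ ^ m * x₂).prod) := by
  induction ms with
  | nil => simpa using isAdmissible_x₂
  | cons m ms ih =>
    obtain ⟨hm, hms⟩ := List.forall_mem_cons.1 hms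
    simpa only [List.map_cons, List.prod_cons, mul_assoc] using (ih hms).x₂_mul_x₁_zpow_mul hm

theorem stmt1_general {ms : List ℤ} (hms : ∀ m ∈ ms, m ≤ 0 ∨ 4 ≤ m) :
    ∃ ws : List G, ws ≠ [] ∧ IsReducedSeq ws ∧
      (ws.head? = some a ∨ ws.head? = some (a ^ 2)) ∧
      (x₂ * (ms.map (fun m => x₁ ^ m * x₂)).prod = b * ws.prod ∨
       x₂ * (ms.map (fun m => x₁ ^ m * x₂)).prod = a ^ 2 * b * a ^ 2 * b * ws.prod) := by
  obtain ⟨_, ⟨ws, hne, hred, hhead, rfl⟩, hprod⟩ := isAdmissible_x₂_mul_prod hms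
  exact ⟨ws, hne, hred, hhead, by simpa only [pow_two, mul_assoc] using hprod⟩

/-- Let `k ≥ 1` and `m₁, …, m_k` be even integers, each `≠ 2`.  Then
`P = x₂ · x₁^{m₁} · x₂ ⋯ x₁^{m_k} · x₂` can be written as `b·S` or as `a²·b·a²·b·S`,
where `S` is the product of a nonempty reduced sequence starting with `a` or `a²`. -/
theorem stmt1 (k : ℕ) (hk : 1 ≤ k) (ms : List ℤ) (hlen : ms.length = k)
    (heven : ∀ mi ∈ ms, Even mi) (hne2 : ∀ mi ∈ ms, mi ≠ 2) :
    ∃ ws : List G, ws ≠ [] ∧ IsReducedSeq ws ∧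
      (ws.head? = some a ∨ ws.head? = some (a ^ 2)) ∧
      (x₂ * (ms.map (fun mi => x₁ ^ mi * x₂)).prod = b * ws.prod ∨
       x₂ * (ms.map (fun mi => x₁ ^ mi * x₂)).prod = a ^ 2 * b * a ^ 2 * b * ws.prod) := by
  exact stmt1_general fun m hm => by have := (heven m hm).two_dvd; have := hne2 m hm; omega
end

section
/- For every integer k ≥ 4 one has x₂ · x₁^k · x₂ = a²·b·a²·(b·a²)^{k−3}·b·a·b·a², and for every integer k ≤ 0 one has x₂ · x₁^k · x₂ = (b·a)^{−k}·b·a²·b·a². -/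
/-!
Put `c = b * a ^ 2`. Then `x₁` is the conjugate of `c` by `a`, and the factor `x₂` on the left
absorbs the conjugating `a` because `a ^ 3 = 1`, which leaves
`x₂ * x₁ ^ k * x₂ = b * c ^ k * a ^ 2 * b * a ^ 2`. Both normal forms describe `b * c ^ k * a ^ 2`:
the first peels off `c ^ 2` on the left, where `b` cancels, and `c` on the right; the second moves
`b` through `c ^ k`, as conjugation by `b` takes `c` to `a ^ 2 * b = (b * a)⁻¹`.
-/

section Group

variable {Γ : Type*} [Group Γ] {g h : Γ}

theorem mul_mul_self_zpow_mul (g h : Γ) (k : ℤ) : (g * h * g) ^ k * g = g * (h * g ^ 2) ^ k := by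
  have conj : SemiconjBy g (h * g ^ 2) (g * h * g) := by
    simp only [SemiconjBy, pow_two, mul_assoc]
  exact (conj.zpow_right k).symm

theorem sq_eq_inv_of_pow_three_eq_one (hg : g ^ 3 = 1) : g ^ 2 = g⁻¹ :=
  eq_inv_of_mul_eq_one_left (by rw [← pow_succ, hg])

theorem mul_sq_mul_zpow_of_pow_three_eq_one (hg : g ^ 3 = 1) (h : Γ) (k : ℤ) :
    h * g ^ 2 * (g * h * g) ^ k = h * (h * g ^ 2) ^ k * g ^ 2 := by
  rw [eq_mul_inv_of_mul_eq (mul_mul_self_zpow_mul g h k), ← sq_eq_inv_of_pow_three_eq_one hg]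
  calc h * g ^ 2 * (g * (h * g ^ 2) ^ k * g ^ 2)
      = h * g ^ 3 * (h * g ^ 2) ^ k * g ^ 2 := by simp only [pow_succ, mul_assoc]
    _ = h * (h * g ^ 2) ^ k * g ^ 2 := by rw [hg, mul_one]

theorem mul_sq_zpow_mul_sq_of_pow_three_eq_one (hg : g ^ 3 = 1) (h : Γ) (k : ℤ) :
    (h * g ^ 2) ^ k * g ^ 2 = (h * g ^ 2) ^ (k - 1) * (h * g) := by
  have peel : h * g ^ 2 * g ^ 2 = h * g := by
    rw [mul_assoc, ← pow_add, pow_succ, hg, one_mul]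
  rw [← peel, ← mul_assoc, ← zpow_add_one, sub_add_cancel]

theorem mul_mul_zpow_of_sq_eq_one (hh : h ^ 2 = 1) (g : Γ) (k : ℤ) :
    h * (h * g) ^ k = g * h * g * (h * g) ^ (k - 2) := by
  have cancel : h * (h * g) ^ (2 : ℤ) = g * h * g := by
    rw [zpow_two, ← mul_assoc, ← mul_assoc h, ← pow_two, hh, one_mul, mul_assoc]
  rw [← cancel, mul_assoc, ← zpow_add, add_sub_cancel]

theorem mul_mul_zpow_eq_zpow_mul_of_sq_eq_one (hh : h ^ 2 = 1) (g : Γ) (k : ℤ) :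
    h * (h * g) ^ k = (g * h) ^ k * h := by
  have conj : SemiconjBy h (h * g) (g * h) := by
    rw [SemiconjBy, ← mul_assoc, mul_assoc g, ← pow_two, hh, one_mul, mul_one]
  exact conj.zpow_right k

theorem sq_mul_zpow_eq_mul_zpow_neg (hg : g ^ 3 = 1) (hh : h ^ 2 = 1) (k : ℤ) :
    (g ^ 2 * h) ^ k = (h * g) ^ (-k) := by
  have h_inv : h⁻¹ = h := inv_eq_of_mul_eq_one_left (by rw [← pow_two, hh])
  rw [← inv_zpow', mul_inv_rev, h_inv, sq_eq_inv_of_pow_three_eq_one hg]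

theorem stmt3_general (hg : g ^ 3 = 1) (hh : h ^ 2 = 1) (k : ℤ) :
    h * g ^ 2 * (g * h * g) ^ k * (h * g ^ 2) =
        g ^ 2 * h * g ^ 2 * (h * g ^ 2) ^ (k - 3) * h * g * h * g ^ 2 ∧
      h * g ^ 2 * (g * h * g) ^ k * (h * g ^ 2) = (h * g) ^ (-k) * h * g ^ 2 * h * g ^ 2 := by
  rw [mul_sq_mul_zpow_of_pow_three_eq_one hg]
  constructor
  · have peel : h * (h * g ^ 2) ^ k * g ^ 2 =
        g ^ 2 * h * g ^ 2 * (h * g ^ 2) ^ (k - 3) * (h * g) := by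
      rw [mul_assoc, mul_sq_zpow_mul_sq_of_pow_three_eq_one hg, ← mul_assoc,
        mul_mul_zpow_of_sq_eq_one hh, (by ring : k - 1 - 2 = k - 3)]
    rw [peel]
    simp only [mul_assoc]
  · rw [mul_mul_zpow_eq_zpow_mul_of_sq_eq_one hh, sq_mul_zpow_eq_mul_zpow_neg hg hh]
    simp only [mul_assoc]

end Group

theorem b_sq : b ^ 2 = 1 := by
  have generator_sq : Multiplicative.ofAdd (1 : ZMod 2) ^ 2 = 1 := by decide
  rw [b, ← map_pow, generator_sq, map_one]

/-- For `k ≥ 4`, `x₂·x₁^k·x₂ = a²·b·a²·(b·a²)^{k-3}·b·a·b·a²`, and for `k ≤ 0`,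
`x₂·x₁^k·x₂ = (b·a)^{-k}·b·a²·b·a²`. -/
theorem stmt3 (k : ℤ) :
    (4 ≤ k → x₂ * x₁ ^ k * x₂ =
      a ^ 2 * b * a ^ 2 * (b * a ^ 2) ^ (k - 3) * b * a * b * a ^ 2) ∧
    (k ≤ 0 → x₂ * x₁ ^ k * x₂ = (b * a) ^ (-k) * b * a ^ 2 * b * a ^ 2) := by
  have normal_forms := stmt3_general a_pow_three b_sq k
  exact ⟨fun _ => normal_forms.1, fun _ => normal_forms.2⟩
end

section
/- Let g = 2k be a positive even integer. Then there exists a quadratic form q : V → ℤ/2ℤ with respect to ω such that: q(γ₁) = 1; q(γ_{2i}) = 1 for every i ∈ {1, …, g}; q(γ_{2j−1} + γ_{2j+1}) = 1 for every j ∈ {1, …, g−1}; and q(γ_{2g−1}) = 0. (Such a q is obtained by setting q(γ_{2i}) = 1 for all i, q(γ_{4j−3}) = 1 and q(γ_{4j−1}) = 0 for all j ∈ {1, …, k}.) -/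
/-!
The products `xᵢ yᵢ` of dual coordinates already sum to a quadratic form with polar form `ω`, and
adding a linear form does not change the polar form. The linear form can be chosen freely, so `q`
may take any values on the symplectic basis. Since `ω(γ_{2j-1}, γ_{2j+1}) = 0`, the condition on
`γ_{2j-1} + γ_{2j+1}` says that `q(γ₁), q(γ₃), …` alternate; starting at `1`, they end at `0`
because `g` is even.
-/

/-- The basis vector `γ_{2i-1}` (the first vector of the `i`-th hyperbolic plane) of
`V = (ℤ/2)^{2g}`, encoded as `Fin g → (ℤ/2)²`. -/
def A (g : ℕ) (i : Fin g) : Fin g → ZMod 2 × ZMod 2 := Pi.single i (1, 0)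

/-- The basis vector `γ_{2i}` (the second vector of the `i`-th hyperbolic plane) of
`V = (ℤ/2)^{2g}`, encoded as `Fin g → (ℤ/2)²`. -/
def B (g : ℕ) (i : Fin g) : Fin g → ZMod 2 × ZMod 2 := Pi.single i (0, 1)

section QuadraticRefinement

variable {ι R : Type*} [Fintype ι] [CommSemiring R]

/-- The symmetric bilinear form of an orthogonal sum of hyperbolic planes `R × R` indexed by `ι`.
In characteristic two, where signs disappear, it is the standard symplectic form `ω`. -/
def hyperbolicForm (u v : ι → R × R) : R :=
  ∑ i, ((u i).1 * (v i).2 + (u i).2 * (v i).1)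

/-- The quadratic function with polar form `hyperbolicForm` that takes the values `a i` and `b i`
on the standard basis vectors of the `i`-th hyperbolic plane. The terms in `a` and `b` are linear
rather than square; over `ZMod 2` this makes no difference, as `x ^ 2 = x` there. -/
def quadraticRefinement (a b : ι → R) (u : ι → R × R) : R :=
  ∑ i, (a i * (u i).1 + b i * (u i).2 + (u i).1 * (u i).2)

theorem quadraticRefinement_add (a b : ι → R) (u v : ι → R × R) :
    quadraticRefinement a b (u + v) =
      quadraticRefinement a b u + quadraticRefinement a b v + hyperbolicForm u v := by
  simp only [quadraticRefinement, hyperbolicForm, ← Finset.sum_add_distrib, Pi.add_apply,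
    Prod.fst_add, Prod.snd_add]
  exact Finset.sum_congr rfl fun i _ => by ring

variable [DecidableEq ι]

theorem hyperbolicForm_single_left (i : ι) (p : R × R) (v : ι → R × R) :
    hyperbolicForm (Pi.single i p) v = p.1 * (v i).2 + p.2 * (v i).1 := by
  rw [hyperbolicForm, Fintype.sum_eq_single i fun j hj => by simp [Pi.single_eq_of_ne hj],
    Pi.single_eq_same]

theorem quadraticRefinement_single (a b : ι → R) (i : ι) (p : R × R) :
    quadraticRefinement a b (Pi.single i p) = a i * p.1 + b i * p.2 + p.1 * p.2 := by
  rw [quadraticRefinement, Fintype.sum_eq_single i fun j hj => by simp [Pi.single_eq_of_ne hj],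
    Pi.single_eq_same]

end QuadraticRefinement

section SymplecticBasis

variable {g : ℕ} (a b : Fin g → ZMod 2)

theorem quadraticRefinement_A (i : Fin g) : quadraticRefinement a b (A g i) = a i := by
  simp [A, quadraticRefinement_single]

theorem quadraticRefinement_B (i : Fin g) : quadraticRefinement a b (B g i) = b i := by
  simp [B, quadraticRefinement_single]

theorem hyperbolicForm_A_A (i j : Fin g) : hyperbolicForm (A g i) (A g j) = 0 := by
  obtain rfl | hij := eq_or_ne i j <;> simp [A, hyperbolicForm_single_left, *]

theorem quadraticRefinement_A_add_A (i j : Fin g) :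
    quadraticRefinement a b (A g i + A g j) = a i + a j := by
  rw [quadraticRefinement_add, hyperbolicForm_A_A, quadraticRefinement_A, quadraticRefinement_A,
    add_zero]

end SymplecticBasis

/-- Let `g = 2k` be a positive even integer.  Then there is a quadratic form `q` on
`V = (ℤ/2)^{2g}` with respect to the standard symplectic form `ω` such that
`q(γ₁) = 1`, `q(γ_{2i}) = 1` for all `i ∈ {1,…,g}`, `q(γ_{2j-1} + γ_{2j+1}) = 1` for all
`j ∈ {1,…,g-1}`, and `q(γ_{2g-1}) = 0`. -/
theorem stmt10 (k : ℕ) (hk : 1 ≤ k) :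
    ∃ q : (Fin (2 * k) → ZMod 2 × ZMod 2) → ZMod 2,
      (∀ u v : Fin (2 * k) → ZMod 2 × ZMod 2,
        q (u + v) = q u + q v + ∑ i, ((u i).1 * (v i).2 + (u i).2 * (v i).1)) ∧
      q (A (2 * k) ⟨0, by omega⟩) = 1 ∧
      (∀ i : Fin (2 * k), q (B (2 * k) i) = 1) ∧
      (∀ j : ℕ, ∀ h : j + 1 < 2 * k,
        q (A (2 * k) ⟨j, by omega⟩ + A (2 * k) ⟨j + 1, h⟩) = 1) ∧
      q (A (2 * k) ⟨2 * k - 1, by omega⟩) = 0 := by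
  let a : Fin (2 * k) → ZMod 2 := fun i => (i : ℕ) + 1
  refine ⟨quadraticRefinement a 1, quadraticRefinement_add a 1, ?first, quadraticRefinement_B a 1,
    ?consecutive, ?last⟩
  case first => simp [quadraticRefinement_A, a]
  case consecutive =>
    intro j h
    calc quadraticRefinement a 1 (A (2 * k) ⟨j, by omega⟩ + A (2 * k) ⟨j + 1, h⟩)
        = ((j : ZMod 2) + 1) + ((j + 1 : ℕ) + 1) := quadraticRefinement_A_add_A a 1 _ _
      _ = ((j : ZMod 2) + 1) + ((j : ZMod 2) + 1) + 1 := by rw [Nat.cast_succ, ← add_assoc]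
      _ = 1 := by rw [CharTwo.add_self_eq_zero, zero_add]
  case last =>
    calc quadraticRefinement a 1 (A (2 * k) ⟨2 * k - 1, by omega⟩)
        = ((2 * k - 1 : ℕ) : ZMod 2) + 1 := quadraticRefinement_A a 1 _
      _ = ((2 * k : ℕ) : ZMod 2) := by rw [← Nat.cast_succ, Nat.succ_eq_add_one,
          Nat.sub_add_cancel (by omega)]
      _ = 0 := (ZMod.natCast_eq_zero_iff _ _).2 (dvd_mul_right 2 k)
end
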